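/- arXiv:2512.01240 — 3 statements merged into one kernel-verified Lean document; each statement's English description precedes it below -/
import Mathlib

section
/- Let E be a finite set, C > 0 a real number, ε ∈ (0,1), p ∈ (0,1], and w : E → ℝ with 0 ≤ w_i ≤ C for every i ∈ E and ∑_{i∈E} w_i ≥ (τ(ε)/p)·C. If R is the p-sampled active set of E, then the probability that ∑_{i∈R} w_i ≥ C is at least 1 − ε. -/
/-!
Rescale so that the weights lie in `[0, 1]` and the threshold is `1`. By convexity of `exp`, each
element contributes to the moment generating function of the active weight at most as much as a
Poisson variable of mean `p * w i`, so the active weight obeys the lower-tail Chernoff bound of a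
Poisson variable. When the mean is at least `m ≥ 1`, this bounds the probability of falling below
`1` by `exp (1 - m) * m`. The number `τ(ε)` is the larger root of
`(t - 1) ^ 2 = 2 * log (1 / ε) * t`, that is, of `t - 1 - (t - t⁻¹) / 2 = log (1 / ε)`; since
`log t ≤ (t - t⁻¹) / 2` for `t ≥ 1`, the bound is at most `ε` at `m = τ(ε)`.
-/

open Finset

/-- `τ(ε) := 1 + ln(1/ε) + √(ln²(1/ε) + 2 ln(1/ε))`. -/
noncomputable def tau (ε : ℝ) : ℝ :=
  1 + Real.log (1 / ε) + Real.sqrt ((Real.log (1 / ε)) ^ 2 + 2 * Real.log (1 / ε))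

open scoped Classical in
/-- Probability, under independent `p`-sampling of the elements of `E`, that the random
active set `R ⊆ E` satisfies the predicate `pred`. -/
noncomputable def samplePr {ι : Type*} [DecidableEq ι] (E : Finset ι) (p : ℝ)
    (pred : Finset ι → Prop) : ℝ :=
  ∑ A ∈ E.powerset, if pred A then p ^ A.card * (1 - p) ^ (E.card - A.card) else 0

section Tau

variable {ε : ℝ}

theorem one_le_tau (hε₀ : 0 < ε) (hε₁ : ε ≤ 1) : 1 ≤ tau ε := by
  have hL : 0 ≤ Real.log (1 / ε) := Real.log_nonneg (one_le_one_div hε₀ hε₁)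
  have hsqrt := Real.sqrt_nonneg (Real.log (1 / ε) ^ 2 + 2 * Real.log (1 / ε))
  unfold tau
  linarith

theorem tau_sub_one_sq (hε₀ : 0 < ε) (hε₁ : ε ≤ 1) :
    (tau ε - 1) ^ 2 = 2 * Real.log (1 / ε) * tau ε := by
  have hL : 0 ≤ Real.log (1 / ε) := Real.log_nonneg (one_le_one_div hε₀ hε₁)
  have hsqrt := Real.sq_sqrt (x := Real.log (1 / ε) ^ 2 + 2 * Real.log (1 / ε)) (by positivity)
  unfold tau
  linear_combination hsqrt

theorem log_le_sub_inv_div_two {t : ℝ} (ht : 1 ≤ t) : Real.log t ≤ (t - t⁻¹) / 2 :=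
  (Real.self_le_sinh_iff.2 (Real.log_nonneg ht)).trans_eq (Real.sinh_log (by linarith))

theorem exp_one_sub_tau_mul_tau_le (hε₀ : 0 < ε) (hε₁ : ε ≤ 1) :
    Real.exp (1 - tau ε) * tau ε ≤ ε := by
  have ht : 1 ≤ tau ε := one_le_tau hε₀ hε₁
  have ht₀ : 0 < tau ε := by linarith
  have hlogε : (tau ε - 1) ^ 2 / (2 * tau ε) = -Real.log ε := by
    rw [tau_sub_one_sq hε₀ hε₁, one_div, Real.log_inv]
    field_simp
  calc Real.exp (1 - tau ε) * tau ε
      = Real.exp (1 - tau ε + Real.log (tau ε)) := by rw [Real.exp_add, Real.exp_log ht₀]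
    _ ≤ Real.exp (1 - tau ε + (tau ε - (tau ε)⁻¹) / 2) := by
      gcongr
      exact log_le_sub_inv_div_two ht
    _ = Real.exp (-((tau ε - 1) ^ 2 / (2 * tau ε))) := by
      congr 1
      field_simp
      ring
    _ = ε := by rw [hlogε, neg_neg, Real.exp_log hε₀]

end Tau

/-- Expectation of `f R`, where `R ⊆ E` is the random active set under independent `p`-sampling.
It is the counterpart of `samplePr` for real-valued functions of `R`, used for the moment generating
function of the active weight. -/
noncomputable def sampleExp {ι : Type*} (E : Finset ι) (p : ℝ) (f : Finset ι → ℝ) : ℝ :=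
  ∑ A ∈ E.powerset, p ^ A.card * (1 - p) ^ (E.card - A.card) * f A

section Sampling

variable {ι : Type*} (E : Finset ι) (p : ℝ)

theorem sampleExp_const_mul (c : ℝ) (f : Finset ι → ℝ) :
    sampleExp E p (fun A ↦ c * f A) = c * sampleExp E p f := by
  simp only [sampleExp, mul_sum, mul_left_comm c]

theorem sampleExp_prod (f : ι → ℝ) :
    sampleExp E p (fun A ↦ ∏ i ∈ A, f i) = ∏ i ∈ E, (p * f i + (1 - p)) := by
  classical
  rw [prod_add, sampleExp]
  refine sum_congr rfl fun A hA ↦ ?_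
  rw [prod_mul_distrib, prod_const, prod_const, card_sdiff_of_subset (mem_powerset.1 hA)]
  ring

variable [DecidableEq ι]

theorem samplePr_not (pred : Finset ι → Prop) :
    samplePr E p (fun A ↦ ¬pred A) = 1 - samplePr E p pred := by
  have htotal : ∑ A ∈ E.powerset, p ^ A.card * (1 - p) ^ (E.card - A.card) = 1 := by
    rw [sum_pow_mul_eq_add_pow, add_sub_cancel, one_pow]
  rw [← htotal, samplePr, samplePr, ← sum_sub_distrib]
  refine sum_congr rfl fun A _ ↦ ?_
  by_cases h : pred A <;> simp [h]

variable {E p}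

theorem samplePr_le_sampleExp (hp : p ∈ Set.Icc (0 : ℝ) 1) {pred : Finset ι → Prop}
    {f : Finset ι → ℝ} (hf : ∀ A ⊆ E, 0 ≤ f A) (hpred : ∀ A ⊆ E, pred A → 1 ≤ f A) :
    samplePr E p pred ≤ sampleExp E p f := by
  refine sum_le_sum fun A hA ↦ ?_
  have hq : 0 ≤ 1 - p := sub_nonneg.2 hp.2
  have hweight : 0 ≤ p ^ A.card * (1 - p) ^ (E.card - A.card) :=
    mul_nonneg (pow_nonneg hp.1 _) (pow_nonneg hq _)
  split_ifs with h
  · exact le_mul_of_one_le_right hweight (hpred A (mem_powerset.1 hA) h)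
  · exact mul_nonneg hweight (hf A (mem_powerset.1 hA))

end Sampling

section Chernoff

theorem exp_mul_le_one_add_mul {x : ℝ} (hx : x ∈ Set.Icc (0 : ℝ) 1) (t : ℝ) :
    Real.exp (t * x) ≤ 1 + x * (Real.exp t - 1) := by
  have hconv := convexOn_exp.2 (Set.mem_univ t) (Set.mem_univ 0) hx.1 (sub_nonneg.2 hx.2)
    (add_sub_cancel x 1)
  simp only [smul_eq_mul, mul_zero, add_zero, Real.exp_zero] at hconv
  rw [mul_comm t x]
  linarith

variable {ι : Type*} {E : Finset ι} {p : ℝ} {w : ι → ℝ}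

theorem sampleExp_exp_mul_sum_le (hp : p ∈ Set.Icc (0 : ℝ) 1)
    (hw : ∀ i ∈ E, w i ∈ Set.Icc (0 : ℝ) 1) (t : ℝ) :
    sampleExp E p (fun A ↦ Real.exp (t * ∑ i ∈ A, w i)) ≤
      Real.exp ((Real.exp t - 1) * (p * ∑ i ∈ E, w i)) := by
  have hfactor : ∀ i ∈ E,
      p * Real.exp (t * w i) + (1 - p) ≤ Real.exp ((Real.exp t - 1) * (p * w i)) := fun i hi ↦
    calc p * Real.exp (t * w i) + (1 - p)
        ≤ p * (1 + w i * (Real.exp t - 1)) + (1 - p) := by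
          gcongr
          · exact hp.1
          · exact exp_mul_le_one_add_mul (hw i hi) t
      _ = (Real.exp t - 1) * (p * w i) + 1 := by ring
      _ ≤ Real.exp ((Real.exp t - 1) * (p * w i)) := Real.add_one_le_exp _
  have hq : 0 ≤ 1 - p := sub_nonneg.2 hp.2
  simp only [mul_sum, Real.exp_sum, sampleExp_prod]
  exact prod_le_prod (fun i _ ↦ add_nonneg (mul_nonneg hp.1 (Real.exp_pos _).le) hq) hfactor

variable [DecidableEq ι]

theorem samplePr_sum_lt_le_exp (hp : p ∈ Set.Icc (0 : ℝ) 1)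
    (hw : ∀ i ∈ E, w i ∈ Set.Icc (0 : ℝ) 1) (a : ℝ) {s : ℝ} (hs : 0 ≤ s) :
    samplePr E p (fun A ↦ ∑ i ∈ A, w i < a) ≤
      Real.exp (s * a - (1 - Real.exp (-s)) * (p * ∑ i ∈ E, w i)) :=
  calc samplePr E p (fun A ↦ ∑ i ∈ A, w i < a)
      ≤ sampleExp E p (fun A ↦ Real.exp (s * a) * Real.exp (-s * ∑ i ∈ A, w i)) := by
        refine samplePr_le_sampleExp hp (fun A _ ↦ by positivity) fun A _ hA ↦ ?_
        rw [← Real.exp_add]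
        exact Real.one_le_exp (by linarith [mul_le_mul_of_nonneg_left hA.le hs])
    _ ≤ Real.exp (s * a) * Real.exp ((Real.exp (-s) - 1) * (p * ∑ i ∈ E, w i)) := by
        rw [sampleExp_const_mul]
        gcongr
        exact sampleExp_exp_mul_sum_le hp hw (-s)
    _ = Real.exp (s * a - (1 - Real.exp (-s)) * (p * ∑ i ∈ E, w i)) := by
        rw [← Real.exp_add]
        ring_nf

theorem samplePr_sum_lt_le (hp : p ∈ Set.Icc (0 : ℝ) 1) (hw : ∀ i ∈ E, w i ∈ Set.Icc (0 : ℝ) 1)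
    {a m : ℝ} (ha : 0 < a) (ham : a ≤ m) (hm : m ≤ p * ∑ i ∈ E, w i) :
    samplePr E p (fun A ↦ ∑ i ∈ A, w i < a) ≤ Real.exp (a - m) * (m / a) ^ a := by
  have hm₀ : 0 < m := ha.trans_le ham
  -- `log (m / a)` minimises the exponent `s * a - (1 - exp (-s)) * m` over `s`.
  set s := Real.log (m / a)
  have hs : 0 ≤ s := Real.log_nonneg ((one_le_div ha).2 ham)
  have hexp : Real.exp (-s) = a / m := by
    rw [Real.exp_neg, Real.exp_log (div_pos hm₀ ha), inv_div]
  calc samplePr E p (fun A ↦ ∑ i ∈ A, w i < a)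
      ≤ Real.exp (s * a - (1 - Real.exp (-s)) * (p * ∑ i ∈ E, w i)) :=
        samplePr_sum_lt_le_exp hp hw a hs
    _ ≤ Real.exp (s * a - (1 - Real.exp (-s)) * m) := by
        gcongr
        exact sub_nonneg.2 (Real.exp_le_one_iff.2 (neg_nonpos.2 hs))
    _ = Real.exp (a - m + s * a) := by
        rw [hexp]
        congr 1
        field_simp
        ring
    _ = Real.exp (a - m) * (m / a) ^ a := by
        rw [Real.exp_add, Real.rpow_def_of_pos (div_pos hm₀ ha)]

end Chernoff

/-- **Activation Weight Concentration.** If the total weight of `E` is at least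
`(τ(ε)/p)·C`, then the active weight is at least `C` with probability at least `1 - ε`. -/
theorem activation_weight_concentration {ι : Type*} [DecidableEq ι]
    (E : Finset ι) (C ε p : ℝ) (hC : 0 < C)
    (hε : ε ∈ Set.Ioo (0 : ℝ) 1) (hp : p ∈ Set.Ioc (0 : ℝ) 1)
    (w : ι → ℝ) (hw : ∀ i ∈ E, 0 ≤ w i ∧ w i ≤ C)
    (hsum : (tau ε / p) * C ≤ ∑ i ∈ E, w i) :
    1 - ε ≤ samplePr E p (fun A => C ≤ ∑ i ∈ A, w i) := by
  have hp' : p ∈ Set.Icc (0 : ℝ) 1 := Set.Ioc_subset_Icc_self hp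
  have hw' : ∀ i ∈ E, w i / C ∈ Set.Icc (0 : ℝ) 1 := fun i hi ↦
    ⟨div_nonneg (hw i hi).1 hC.le, (div_le_one hC).2 (hw i hi).2⟩
  have hmean : tau ε ≤ p * ∑ i ∈ E, w i / C := by
    rwa [← sum_div, mul_comm, ← div_le_iff₀ hp.1, le_div_iff₀ hC]
  have hfail : 1 - samplePr E p (fun A ↦ C ≤ ∑ i ∈ A, w i) ≤ ε :=
    calc 1 - samplePr E p (fun A ↦ C ≤ ∑ i ∈ A, w i)
        = samplePr E p (fun A ↦ ∑ i ∈ A, w i / C < 1) := by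
          simp only [← samplePr_not, ← sum_div, div_lt_one hC, not_le]
      _ ≤ Real.exp (1 - tau ε) * (tau ε / 1) ^ (1 : ℝ) :=
          samplePr_sum_lt_le hp' hw' one_pos (one_le_tau hε.1 hε.2.le) hmean
      _ = Real.exp (1 - tau ε) * tau ε := by rw [div_one, Real.rpow_one]
      _ ≤ ε := exp_one_sub_tau_mul_tau_le hε.1 hε.2.le
  exact sub_le_comm.1 hfail
end

section
/- Let E be a finite set with a weight function w : E → ℝ satisfying w e > 0 for all e ∈ E. Let B ⊆ E satisfy w b ≤ w e for every b ∈ B and every e ∈ E \ B, and let A ⊆ E and C ∈ ℝ satisfy ∑_{a∈A} w a ≤ C ≤ ∑_{b∈B} w b. Then there exists an injective map φ : A → B such that w(φ(a)) ≤ w(a) for every a ∈ A. -/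
open Finset

/-! Fix `A ∩ B` pointwise, and send `A \ B` into `B \ A` by any injection: every element of `B \ A`
is at most as heavy as every element of `A \ B`. Such an injection exists by counting. Cancelling
the contribution of `A ∩ B`, the total weight of `A \ B` is at most that of `B \ A`. If `A \ B` were
the larger set, pairing the elements of `B \ A` with elements of `A \ B` would leave over some
element of positive weight, making `A \ B` strictly heavier. -/

theorem sum_lt_sum_of_card_lt {ι κ M : Type*} [AddCommMonoid M] [PartialOrder M]
    [IsOrderedCancelAddMonoid M] {s : Finset ι} {t : Finset κ} {f : ι → M} {g : κ → M}
    (hcard : #s < #t) (hpos : ∀ j ∈ t, 0 < g j) (hle : ∀ i ∈ s, ∀ j ∈ t, f i ≤ g j) :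
    ∑ i ∈ s, f i < ∑ j ∈ t, g j := by
  obtain ⟨e, he⟩ : ∃ e : s ↪ κ, Set.range e ⊆ t :=
    Function.Embedding.exists_of_card_le_finset ((Fintype.card_coe s).trans_le hcard.le)
  have he_mem (i : s) : e i ∈ t := he (Set.mem_range_self i)
  have hsub : univ.map e ⊆ t := by rwa [← coe_subset, coe_map, coe_univ, Set.image_univ]
  obtain ⟨j, hjt, hj⟩ : ∃ j ∈ t, j ∉ univ.map e :=
    exists_mem_notMem_of_card_lt_card (by simpa using hcard)
  calc ∑ i ∈ s, f i = ∑ i : s, f i := (sum_coe_sort s f).symm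
    _ ≤ ∑ i : s, g (e i) := sum_le_sum fun i _ ↦ hle i i.2 (e i) (he_mem i)
    _ = ∑ j ∈ univ.map e, g j := (sum_map univ e g).symm
    _ < ∑ j ∈ t, g j := sum_lt_sum_of_subset hsub hjt hj (hpos j hjt) fun k hk _ ↦ (hpos k hk).le

theorem exists_injOn_mapsTo_sdiff_of_card_le {α : Type*} [DecidableEq α] {s t : Finset α}
    (hcard : #s ≤ #t) :
    ∃ φ : α → α, Set.InjOn φ s ∧ Set.MapsTo φ ↑(s \ t) ↑(t \ s) ∧
      Set.EqOn φ id ↑(s ∩ t) := by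
  obtain ⟨e, he⟩ : ∃ e : ↥(s \ t) ↪ α, Set.range e ⊆ ↑(t \ s) :=
    Function.Embedding.exists_of_card_le_finset <| by
      simpa only [Fintype.card_coe] using card_sdiff_le_card_sdiff_iff.2 hcard
  have he_mem (a : ↥(s \ t)) : e a ∈ t \ s := he (Set.mem_range_self a)
  let φ (a : α) : α := if h : a ∈ s \ t then e ⟨a, h⟩ else a
  have hφ_sdiff {a : α} (h : a ∈ s \ t) : φ a = e ⟨a, h⟩ := dif_pos h
  have hmaps : Set.MapsTo φ ↑(s \ t) ↑(t \ s) := fun a ha ↦ hφ_sdiff ha ▸ he_mem ⟨a, ha⟩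
  have heq : Set.EqOn φ id ↑(s ∩ t) := fun a ha ↦
    dif_neg fun ha' ↦ (mem_sdiff.1 ha').2 (mem_inter.1 ha).2
  have hinj_sdiff : Set.InjOn φ ↑(s \ t) := fun a ha b hb hab ↦
    congrArg Subtype.val (e.injective ((hφ_sdiff ha).symm.trans (hab.trans (hφ_sdiff hb))))
  have hinj_inter : Set.InjOn φ ↑(s ∩ t) := (Set.injOn_id _).congr heq.symm
  have hne : ∀ a ∈ s \ t, ∀ b ∈ s ∩ t, φ a ≠ φ b := fun a ha b hb hab ↦
    (mem_sdiff.1 (hmaps ha)).2 ((hab.trans (heq hb)) ▸ (mem_inter.1 hb).1)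
  refine ⟨φ, ?_, hmaps, heq⟩
  rw [← sdiff_union_inter s t, coe_union,
    Set.injOn_union (disjoint_coe.2 (disjoint_sdiff_inter s t))]
  exact ⟨hinj_sdiff, hinj_inter, hne⟩

theorem exists_injective_lighter_substitution_general {ι M : Type*} [DecidableEq ι]
    [AddCommMonoid M] [PartialOrder M] [IsOrderedCancelAddMonoid M] {w : ι → M} {A B : Finset ι}
    (hpos : ∀ a ∈ A \ B, 0 < w a) (hlight : ∀ b ∈ B \ A, ∀ a ∈ A \ B, w b ≤ w a)
    (hsum : ∑ a ∈ A, w a ≤ ∑ b ∈ B, w b) :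
    ∃ φ : ι → ι, Set.InjOn φ ↑A ∧ (∀ a ∈ A, φ a ∈ B) ∧ ∀ a ∈ A, w (φ a) ≤ w a := by
  have hsum_sdiff : ∑ a ∈ A \ B, w a ≤ ∑ b ∈ B \ A, w b := sum_sdiff_le_sum_sdiff.2 hsum
  have hcard_sdiff : #(A \ B) ≤ #(B \ A) :=
    not_lt.1 fun hlt ↦ (sum_lt_sum_of_card_lt hlt hpos hlight).not_ge hsum_sdiff
  obtain ⟨φ, hinj, hmaps, heq⟩ :=
    exists_injOn_mapsTo_sdiff_of_card_le (card_sdiff_le_card_sdiff_iff.1 hcard_sdiff)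
  have hφ : ∀ a ∈ A, φ a ∈ B ∧ w (φ a) ≤ w a := by
    intro a ha
    by_cases hab : a ∈ B
    · have hφa : φ a = a := heq (mem_inter.2 ⟨ha, hab⟩)
      rw [hφa]
      exact ⟨hab, le_rfl⟩
    · have haAB : a ∈ A \ B := mem_sdiff.2 ⟨ha, hab⟩
      have hφa : φ a ∈ B \ A := hmaps haAB
      exact ⟨(mem_sdiff.1 hφa).1, hlight _ hφa a haAB⟩
  exact ⟨φ, hinj, fun a ha ↦ (hφ a ha).1, fun a ha ↦ (hφ a ha).2⟩

/-- If `B` consists of the lightest items of `E` and `∑_A w ≤ C ≤ ∑_B w`, then there is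
an injective map `φ : A → B` with `w (φ a) ≤ w a` for all `a ∈ A`. -/
theorem exists_injective_lighter_substitution {ι : Type*} [DecidableEq ι]
    (E : Finset ι) (w : ι → ℝ) (hw : ∀ e ∈ E, 0 < w e)
    (B : Finset ι) (hB : B ⊆ E)
    (hBlight : ∀ b ∈ B, ∀ e ∈ E \ B, w b ≤ w e)
    (A : Finset ι) (hA : A ⊆ E) (C : ℝ)
    (hAC : (∑ a ∈ A, w a) ≤ C) (hCB : C ≤ ∑ b ∈ B, w b) :
    ∃ φ : ι → ι, Set.InjOn φ ↑A ∧ (∀ a ∈ A, φ a ∈ B) ∧ ∀ a ∈ A, w (φ a) ≤ w a := by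
  exact exists_injective_lighter_substitution_general (fun a ha ↦ hw a (hA (mem_sdiff.1 ha).1))
    (fun b hb a ha ↦ hBlight b (mem_sdiff.1 hb).1 a (sdiff_subset_sdiff hA subset_rfl ha))
    (hAC.trans hCB)
end

section
/- Let a GAP instance be given and let A ⊆ E. Let σ be a feasible assignment on A whose value is maximum among all feasible assignments on A. Then for every item i ∈ A and every knapsack j with w_{ij} ≤ C_j, one has v_{ij} ≤ v_i^σ + v_j(σ), where v_i^σ := v_{i,σ(i)} if i belongs to the domain of σ and v_i^σ := 0 otherwise, and v_j(σ) := ∑_{i' ∈ dom σ, σ(i') = j} v_{i'j}. -/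
open Finset

/-- Total value of a partial assignment `σ` of items (within the ground set `E`)
to knapsacks: `v(σ) = ∑_{i ∈ dom σ} v_{i,σ(i)}`. -/
noncomputable def assignValue {ι : Type*} {m : ℕ} (E : Finset ι)
    (v : ι → Fin m → ℝ) (σ : ι → Option (Fin m)) : ℝ :=
  ∑ i ∈ E, (σ i).elim 0 (v i)

/-- Total weight placed by the partial assignment `σ` into knapsack `j`. -/
noncomputable def knapWeight {ι : Type*} [DecidableEq ι] {m : ℕ} (E : Finset ι)
    (w : ι → Fin m → ℝ) (σ : ι → Option (Fin m)) (j : Fin m) : ℝ :=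
  ∑ i ∈ E, if σ i = some j then w i j else 0

/-!
Empty knapsack `j` and put item `i` there. The new assignment is feasible, gains `v_{ij}` and loses
`v_j(σ)` and, if `i` was in another knapsack, `v_i^σ`; optimality of `σ` says that the gain does not
exceed the loss. If `i` already lies in `j`, the bound reduces to `0 ≤ v_j(σ)`, which is optimality
of `σ` against merely emptying `j`.
-/

theorem sum_update_add {ι α M : Type*} [DecidableEq ι] [AddCommMonoid M] {s : Finset ι} {i : ι}
    (hi : i ∈ s) (τ : ι → α) (a : α) (g : ι → α → M) :
    ∑ k ∈ s, g k (Function.update τ i a k) + g i (τ i) = ∑ k ∈ s, g k (τ k) + g i a := by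
  simp only [Function.apply_update g]
  rw [sum_update_of_mem hi, sdiff_singleton_eq_erase, add_assoc, sum_erase_add s _ hi, add_comm]

/-- A partial assignment of items to knapsacks, with `none` for the items outside its domain. -/
abbrev PartialAssignment (ι κ : Type*) := ι → Option κ

namespace PartialAssignment

variable {ι κ M N : Type*} {σ : PartialAssignment ι κ} {E : Finset ι} {A : Set ι} {i : ι} {j l : κ}

/-- The value `v(σ)` of a partial assignment, counting the items of `E`; `assignValue` is the
case of real values. -/
def value [AddCommMonoid M] (σ : PartialAssignment ι κ) (E : Finset ι) (v : ι → κ → M) : M :=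
  ∑ k ∈ E, (σ k).elim 0 (v k)

variable [DecidableEq κ]

/-- The total of `f` over the items of `E` lying in knapsack `j`: the weight in `j` when `f` is the
weight function (`knapWeight` is the real case), and `v_j(σ)` when `f` is the value function. -/
def load [AddCommMonoid M] (σ : PartialAssignment ι κ) (E : Finset ι) (f : ι → κ → M) (j : κ) : M :=
  ∑ k ∈ E, if σ k = some j then f k j else 0

/-- Feasible assignments on `A`: the domain lies in `A`, and no knapsack exceeds its capacity. -/
def IsFeasible [AddCommMonoid N] [LE N] (σ : PartialAssignment ι κ) (E : Finset ι) (A : Set ι)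
    (C : κ → N) (w : ι → κ → N) : Prop :=
  (∀ k, σ k ≠ none → k ∈ A) ∧ ∀ l, σ.load E w l ≤ C l

/-- The partial assignment obtained from `σ` by emptying knapsack `j`. -/
def clear (σ : PartialAssignment ι κ) (j : κ) : PartialAssignment ι κ :=
  fun k => if σ k = some j then none else σ k

theorem clear_of_ne (h : σ i ≠ some j) : σ.clear j i = σ i :=
  if_neg h

theorem clear_eq_none (h : σ i = none) : σ.clear j i = none := by
  simp only [clear, h, ite_self]

theorem clear_eq_some_iff : σ.clear j i = some l ↔ σ i = some l ∧ l ≠ j := by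
  unfold clear
  grind

section Additive

variable [AddCommMonoid M]

theorem value_clear_add_load (σ : PartialAssignment ι κ) (E : Finset ι) (v : ι → κ → M) (j : κ) :
    (σ.clear j).value E v + σ.load E v j = σ.value E v := by
  simp only [value, load, ← sum_add_distrib]
  refine sum_congr rfl fun k _ => ?_
  by_cases h : σ k = some j <;> simp [clear, h]

theorem load_clear_self (σ : PartialAssignment ι κ) (E : Finset ι) (f : ι → κ → M) (j : κ) :
    (σ.clear j).load E f j = 0 := by
  simp [load, clear_eq_some_iff]

theorem load_clear_of_ne (σ : PartialAssignment ι κ) (E : Finset ι) (f : ι → κ → M) (h : l ≠ j) :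
    (σ.clear j).load E f l = σ.load E f l := by
  simp [load, clear_eq_some_iff, h]

end Additive

theorem load_nonneg_of_value_clear_le [AddCommMonoid M] [Preorder M] [IsOrderedCancelAddMonoid M]
    {v : ι → κ → M} (h : (σ.clear j).value E v ≤ σ.value E v) : 0 ≤ σ.load E v j := by
  rwa [← value_clear_add_load σ E v j, le_add_iff_nonneg_right] at h

theorem IsFeasible.clear [AddCommMonoid N] [Preorder N] {C : κ → N} {w : ι → κ → N}
    (hσ : σ.IsFeasible E A C w) (hj : 0 ≤ C j) : (σ.clear j).IsFeasible E A C w := by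
  refine ⟨fun k hk => hσ.1 k fun hnone => hk (clear_eq_none hnone), fun l => ?_⟩
  obtain rfl | hl := eq_or_ne l j
  · rwa [load_clear_self]
  · rw [load_clear_of_ne σ E w hl]
    exact hσ.2 l

variable [DecidableEq ι]

/-- The exchange move: empty knapsack `j`, then put item `i` there, taking it out of any other
knapsack. -/
def replace (σ : PartialAssignment ι κ) (i : ι) (j : κ) : PartialAssignment ι κ :=
  Function.update (σ.clear j) i (some j)

section Additive

variable [AddCommMonoid M]

theorem value_replace_add (σ : PartialAssignment ι κ) (hi : i ∈ E) (j : κ) (v : ι → κ → M) :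
    (σ.replace i j).value E v + (σ.clear j i).elim 0 (v i) = (σ.clear j).value E v + v i j :=
  sum_update_add hi (σ.clear j) (some j) fun k o => o.elim 0 (v k)

theorem load_replace_self (σ : PartialAssignment ι κ) (hi : i ∈ E) (f : ι → κ → M) (j : κ) :
    (σ.replace i j).load E f j = f i j := by
  have h : (σ.replace i j).load E f j + (if σ.clear j i = some j then f i j else 0) =
      (σ.clear j).load E f j + if some j = some j then f i j else 0 :=
    sum_update_add hi (σ.clear j) (some j) fun k o => if o = some j then f k j else 0
  simpa [clear_eq_some_iff, load_clear_self] using h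

theorem load_replace_le_of_ne [Preorder M] [IsOrderedAddMonoid M] (σ : PartialAssignment ι κ)
    (E : Finset ι) {f : ι → κ → M} (hf : 0 ≤ f i l) (h : l ≠ j) :
    (σ.replace i j).load E f l ≤ σ.load E f l := by
  refine sum_le_sum fun k _ => ?_
  obtain rfl | hk := eq_or_ne k i
  · simpa [replace, h.symm] using ite_nonneg hf le_rfl
  · simp [replace, hk, clear_eq_some_iff, h]

end Additive

theorem IsFeasible.replace [AddCommMonoid N] [Preorder N] [IsOrderedAddMonoid N] {C : κ → N}
    {w : ι → κ → N} (hσ : σ.IsFeasible E A C w) (hiE : i ∈ E) (hiA : i ∈ A) (hw : ∀ l, 0 ≤ w i l)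
    (hij : w i j ≤ C j) : (σ.replace i j).IsFeasible E A C w := by
  have hclear : (σ.clear j).IsFeasible E A C w := hσ.clear ((hw j).trans hij)
  refine ⟨fun k hk => ?_, fun l => ?_⟩
  · obtain rfl | hki := eq_or_ne k i
    · exact hiA
    · exact hclear.1 k (by rwa [PartialAssignment.replace, Function.update_of_ne hki] at hk)
  · obtain rfl | hl := eq_or_ne l j
    · rwa [load_replace_self σ hiE]
    · exact (load_replace_le_of_ne σ E (hw l) hl).trans (hσ.2 l)

theorem le_add_load_of_value_replace_le [AddCommMonoid M] [Preorder M]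
    [IsOrderedCancelAddMonoid M] {v : ι → κ → M} (hi : i ∈ E)
    (h : (σ.replace i j).value E v ≤ σ.value E v) :
    v i j ≤ (σ.clear j i).elim 0 (v i) + σ.load E v j := by
  refine le_of_add_le_add_left (a := (σ.clear j).value E v) ?_
  calc (σ.clear j).value E v + v i j
      = (σ.replace i j).value E v + (σ.clear j i).elim 0 (v i) := (value_replace_add σ hi j v).symm
    _ ≤ σ.value E v + (σ.clear j i).elim 0 (v i) := by gcongr
    _ = (σ.clear j).value E v + ((σ.clear j i).elim 0 (v i) + σ.load E v j) := by
      rw [← value_clear_add_load σ E v j, add_assoc, add_comm (σ.load E v j)]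

end PartialAssignment

open PartialAssignment in
theorem optimal_assignment_value_bound_general {ι κ M N : Type*} [DecidableEq κ]
    [AddCommMonoid M] [Preorder M] [IsOrderedCancelAddMonoid M]
    [AddCommMonoid N] [Preorder N] [IsOrderedAddMonoid N]
    {E : Finset ι} {A : Set ι} {C : κ → N} {v : ι → κ → M} {w : ι → κ → N}
    {σ : PartialAssignment ι κ} (hσ : σ.IsFeasible E A C w)
    (hopt : IsMaxOn (fun τ : PartialAssignment ι κ => τ.value E v) {τ | τ.IsFeasible E A C w} σ)
    {i : ι} (hiE : i ∈ E) (hiA : i ∈ A) {j : κ} (hw : ∀ l, 0 ≤ w i l) (hij : w i j ≤ C j) :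
    v i j ≤ (σ i).elim 0 (v i) + σ.load E v j := by
  classical
  by_cases hσi : σ i = some j
  · have hload : 0 ≤ σ.load E v j :=
      load_nonneg_of_value_clear_le (hopt (hσ.clear ((hw j).trans hij)))
    simpa [hσi] using hload
  · rw [← clear_of_ne hσi]
    exact le_add_load_of_value_replace_le hiE (hopt (hσ.replace hiE hiA hw hij))

/-- For an optimal feasible assignment `σ` on `A`: for every item `i ∈ A` and knapsack `j`
with `w_{ij} ≤ C_j`, one has `v_{ij} ≤ v_i^σ + v_j(σ)`. -/
theorem optimal_assignment_value_bound {ι : Type*} [DecidableEq ι] {m : ℕ}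
    (E : Finset ι) (C : Fin m → ℝ) (hC : ∀ j, 0 < C j)
    (v w : ι → Fin m → ℝ) (hv : ∀ i j, 0 ≤ v i j) (hw : ∀ i j, 0 ≤ w i j)
    (hsomewhere : ∀ i ∈ E, ∃ j, w i j ≤ C j)
    (A : Finset ι) (hA : A ⊆ E)
    (σ : ι → Option (Fin m))
    (hdom : ∀ i, σ i ≠ none → i ∈ A)
    (hfeas : ∀ j, knapWeight E w σ j ≤ C j)
    (hopt : ∀ σ' : ι → Option (Fin m), (∀ i, σ' i ≠ none → i ∈ A) →
      (∀ j, knapWeight E w σ' j ≤ C j) → assignValue E v σ' ≤ assignValue E v σ)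
    (i : ι) (hi : i ∈ A) (j : Fin m) (hij : w i j ≤ C j) :
    v i j ≤ (σ i).elim 0 (v i) + ∑ i' ∈ E, (if σ i' = some j then v i' j else 0) := by
  exact optimal_assignment_value_bound_general (A := A) (v := v) ⟨hdom, hfeas⟩
    (fun τ hτ => hopt τ hτ.1 hτ.2) (hA hi) hi (hw i) hij
end
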